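/- arXiv:2412.20482 — 5 statements merged into one kernel-verified Lean document; each statement's English description precedes it below -/
import Mathlib

section
/- Let τ be in the upper half-plane and let z ∈ ℂ satisfy θ₁(2z|τ) ≠ 0 (and assume θ₃(0|τ) ≠ 0 and θ₄(0|τ) ≠ 0, which holds for every τ in the upper half-plane). Then the determinant of the matrix Ω(z) equals −θ₂(0|τ)²·θ₁(2z|τ). -/
noncomputable section

open Complex

/-- The theta function `θ_{a,b}(z|τ) = ∑_{k∈ℤ} exp(πiτ(k+a)² + 2πi(k+a)(z+b))`. -/
def thetaAB (a b : ℝ) (z τ : ℂ) : ℂ :=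
  ∑' k : ℤ, Complex.exp ((Real.pi : ℂ) * Complex.I * τ * ((k : ℂ) + (a : ℂ)) ^ 2 +
    2 * (Real.pi : ℂ) * Complex.I * ((k : ℂ) + (a : ℂ)) * (z + (b : ℂ)))

/-- The Jacobi theta function `θ₁(z|τ) = −θ_{1/2,1/2}(z|τ)`. -/
def jth1 (z τ : ℂ) : ℂ := -thetaAB (1/2) (1/2) z τ

/-- The Jacobi theta function `θ₂(z|τ) = θ_{1/2,0}(z|τ)`. -/
def jth2 (z τ : ℂ) : ℂ := thetaAB (1/2) 0 z τ

/-- The Jacobi theta function `θ₃(z|τ) = θ_{0,0}(z|τ)`. -/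
def jth3 (z τ : ℂ) : ℂ := thetaAB 0 0 z τ

/-- The Jacobi theta function `θ₄(z|τ) = θ_{0,1/2}(z|τ)`. -/
def jth4 (z τ : ℂ) : ℂ := thetaAB 0 (1/2) z τ

/-- `ψ₊(z) = (θ₄(0|τ)²/θ₃(0|τ))·(θ₃(2z|τ)/θ₁(2z|τ)) − (θ₃(0|τ)²/θ₄(0|τ))·(θ₄(2z|τ)/θ₁(2z|τ))`. -/
def psiPlus (τ z : ℂ) : ℂ :=
  (jth4 0 τ) ^ 2 / jth3 0 τ * (jth3 (2*z) τ / jth1 (2*z) τ) -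
    (jth3 0 τ) ^ 2 / jth4 0 τ * (jth4 (2*z) τ / jth1 (2*z) τ)

/-- `ψ₋(z) = −(θ₄(0|τ)²/θ₃(0|τ))·(θ₃(2z|τ)/θ₁(2z|τ)) − (θ₃(0|τ)²/θ₄(0|τ))·(θ₄(2z|τ)/θ₁(2z|τ))`. -/
def psiMinus (τ z : ℂ) : ℂ :=
  -((jth4 0 τ) ^ 2 / jth3 0 τ * (jth3 (2*z) τ / jth1 (2*z) τ)) -
    (jth3 0 τ) ^ 2 / jth4 0 τ * (jth4 (2*z) τ / jth1 (2*z) τ)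

/-- `Ω(z) = [[θ₃(2z|2τ), ψ₋(z)θ₂(2z|2τ)], [θ₂(2z|2τ), ψ₊(z)θ₃(2z|2τ)]]`. -/
def OmegaMat (τ z : ℂ) : Matrix (Fin 2) (Fin 2) ℂ :=
  !![jth3 (2*z) (2*τ), psiMinus τ z * jth2 (2*z) (2*τ);
     jth2 (2*z) (2*τ), psiPlus τ z * jth3 (2*z) (2*τ)]

/-!
Under `(m, n) ↦ (m + n, m - n)`, `ℤ × ℤ` becomes the index-two lattice of pairs of equal parity,
whose other coset is a translate. Since `(m + n)² + (m - n)² = 2 (m² + n²)`, a product of two theta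
series at `τ` therefore splits into two products of theta series at `2 τ`. The cases
`θ₃(2z) θ₃(0)` and `θ₄(2z) θ₄(0)` of this formula remove `2 τ` from `det Ω(z)`, leaving
`(θ₃(2z)² θ₄(0)² - θ₄(2z)² θ₃(0)²) / θ₁(2z)`; its numerator is evaluated by expressing the squares
of all four theta functions at `τ` through `θ₂` and `θ₃` at `2 τ`.
-/

/-- The summand of index `k` in the series `thetaAB`, named so that identities between theta series
can be proved summand by summand. -/
def thetaABTerm (a b : ℝ) (z τ : ℂ) (k : ℤ) : ℂ :=
  Complex.exp (Real.pi * I * τ * (k + a) ^ 2 + 2 * Real.pi * I * (k + a) * (z + b))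

theorem thetaAB_eq_tsum (a b : ℝ) (z τ : ℂ) : thetaAB a b z τ = ∑' k, thetaABTerm a b z τ k := rfl

theorem thetaABTerm_eq_mul_jacobiTheta₂_term (a b : ℝ) (z τ : ℂ) (k : ℤ) :
    thetaABTerm a b z τ k =
      Complex.exp (Real.pi * I * τ * a ^ 2 + 2 * Real.pi * I * a * (z + b)) *
        jacobiTheta₂_term k (z + b + a * τ) τ := by
  rw [thetaABTerm, jacobiTheta₂_term, ← Complex.exp_add]
  ring_nf

theorem summable_thetaABTerm (a b : ℝ) (z : ℂ) {τ : ℂ} (hτ : 0 < τ.im) :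
    Summable (thetaABTerm a b z τ) := by
  simp only [funext (thetaABTerm_eq_mul_jacobiTheta₂_term a b z τ)]
  exact ((summable_jacobiTheta₂_term_iff _ τ).2 hτ).mul_left _

theorem thetaABTerm_add_one_left (a b : ℝ) (z τ : ℂ) (k : ℤ) :
    thetaABTerm (a + 1) b z τ k = thetaABTerm a b z τ (k + 1) := by
  simp only [thetaABTerm]
  push_cast
  ring_nf

theorem thetaABTerm_add_one_right (a b : ℝ) (z τ : ℂ) (k : ℤ) :
    thetaABTerm a (b + 1) z τ k = Complex.exp (2 * Real.pi * I * a) * thetaABTerm a b z τ k := by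
  rw [← one_mul (_ * _), ← Complex.exp_int_mul_two_pi_mul_I k]
  simp only [thetaABTerm, ← Complex.exp_add]
  push_cast
  ring_nf

theorem thetaAB_add_one_left (a b : ℝ) (z τ : ℂ) : thetaAB (a + 1) b z τ = thetaAB a b z τ := by
  simp only [thetaAB_eq_tsum, thetaABTerm_add_one_left]
  exact (Equiv.addRight (1 : ℤ)).tsum_eq (thetaABTerm a b z τ)

theorem thetaAB_add_one_right (a b : ℝ) (z τ : ℂ) :
    thetaAB a (b + 1) z τ = Complex.exp (2 * Real.pi * I * a) * thetaAB a b z τ := by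
  simp only [thetaAB_eq_tsum, thetaABTerm_add_one_right, tsum_mul_left]

/-- The decomposition of `ℤ × ℤ` into pairs of equal parity, written `(m + n, m - n)`, and pairs of
opposite parity, written `(m + n + 1, m - n)`. It reindexes products of theta series. -/
def intProdParityEquiv : (ℤ × ℤ) ⊕ (ℤ × ℤ) ≃ ℤ × ℤ :=
  Equiv.ofBijective
    (Sum.elim (fun p ↦ (p.1 + p.2, p.1 - p.2)) fun p ↦ (p.1 + p.2 + 1, p.1 - p.2)) <| by
    constructor
    · rintro (⟨m, n⟩ | ⟨m, n⟩) (⟨m', n'⟩ | ⟨m', n'⟩) h <;>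
        simp only [Sum.elim_inl, Sum.elim_inr, Prod.mk.injEq, Sum.inl.injEq, Sum.inr.injEq,
          reduceCtorEq] at h ⊢ <;> omega
    · rintro ⟨k, l⟩
      obtain ⟨m, h | h⟩ := Int.even_or_odd' (k + l)
      · exact ⟨Sum.inl (m, m - l), by simp only [Sum.elim_inl, Prod.mk.injEq]; omega⟩
      · exact ⟨Sum.inr (m, m - l), by simp only [Sum.elim_inr, Prod.mk.injEq]; omega⟩

theorem hasSum_int_prod_of_parity {α : Type*} [AddCommMonoid α] [TopologicalSpace α]
    [ContinuousAdd α] {f : ℤ × ℤ → α} {s t : α}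
    (hs : HasSum (fun p : ℤ × ℤ ↦ f (p.1 + p.2, p.1 - p.2)) s)
    (ht : HasSum (fun p : ℤ × ℤ ↦ f (p.1 + p.2 + 1, p.1 - p.2)) t) : HasSum f (s + t) :=
  intProdParityEquiv.hasSum_iff.1 (HasSum.sum hs ht)

theorem hasSum_thetaABTerm_mul (a b c d : ℝ) (x y : ℂ) {τ σ : ℂ} (hτ : 0 < τ.im) (hσ : 0 < σ.im) :
    HasSum (fun p : ℤ × ℤ ↦ thetaABTerm a b x τ p.1 * thetaABTerm c d y σ p.2)
      (thetaAB a b x τ * thetaAB c d y σ) :=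
  have hf := summable_thetaABTerm a b x hτ
  have hg := summable_thetaABTerm c d y hσ
  hf.hasSum.mul hg.hasSum (summable_mul_of_summable_norm hf.norm hg.norm)

theorem thetaABTerm_add_mul_thetaABTerm_sub (a b c d : ℝ) (x y τ : ℂ) (m n : ℤ) :
    thetaABTerm a b x τ (m + n) * thetaABTerm c d y τ (m - n) =
      thetaABTerm ((a + c) / 2) (b + d) (x + y) (2 * τ) m *
        thetaABTerm ((a - c) / 2) (b - d) (x - y) (2 * τ) n := by
  simp only [thetaABTerm, ← Complex.exp_add]
  push_cast
  ring_nf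

theorem thetaAB_mul_thetaAB (a b c d : ℝ) (x y : ℂ) {τ : ℂ} (hτ : 0 < τ.im) :
    thetaAB a b x τ * thetaAB c d y τ =
      thetaAB ((a + c) / 2) (b + d) (x + y) (2 * τ) *
          thetaAB ((a - c) / 2) (b - d) (x - y) (2 * τ) +
        thetaAB ((a + 1 + c) / 2) (b + d) (x + y) (2 * τ) *
          thetaAB ((a + 1 - c) / 2) (b - d) (x - y) (2 * τ) := by
  have h2τ : 0 < (2 * τ).im := by simpa using hτ
  refine (hasSum_thetaABTerm_mul a b c d x y hτ hτ).unique (hasSum_int_prod_of_parity ?even ?odd)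
  case even =>
    simp only [thetaABTerm_add_mul_thetaABTerm_sub]
    exact hasSum_thetaABTerm_mul _ _ _ _ _ _ h2τ h2τ
  case odd =>
    simp only [← thetaABTerm_add_one_left, thetaABTerm_add_mul_thetaABTerm_sub]
    exact hasSum_thetaABTerm_mul _ _ _ _ _ _ h2τ h2τ

theorem thetaAB_mul_thetaAB_same_char (a b : ℝ) (x y : ℂ) {τ : ℂ} (hτ : 0 < τ.im) :
    thetaAB a b x τ * thetaAB a b y τ =
      thetaAB a (2 * b) (x + y) (2 * τ) * jth3 (x - y) (2 * τ) +
        thetaAB (a + 1 / 2) (2 * b) (x + y) (2 * τ) * jth2 (x - y) (2 * τ) := by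
  rw [thetaAB_mul_thetaAB a b a b x y hτ, jth3, jth2]
  ring_nf

theorem thetaAB_one_zero (z τ : ℂ) : thetaAB 1 0 z τ = jth3 z τ := by
  simpa only [zero_add, jth3] using thetaAB_add_one_left 0 0 z τ

theorem thetaAB_zero_one (z τ : ℂ) : thetaAB 0 1 z τ = jth3 z τ := by
  simpa [jth3] using thetaAB_add_one_right 0 0 z τ

theorem thetaAB_one_one (z τ : ℂ) : thetaAB 1 1 z τ = jth3 z τ := by
  simpa only [zero_add, thetaAB_zero_one] using thetaAB_add_one_left 0 1 z τ

theorem thetaAB_half_one (z τ : ℂ) : thetaAB (1 / 2) 1 z τ = -jth2 z τ := by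
  have hexp : Complex.exp (2 * Real.pi * I * (1 / 2 : ℝ)) = -1 := by
    rw [← Complex.exp_pi_mul_I]
    push_cast
    ring_nf
  simpa only [zero_add, hexp, neg_one_mul, jth2] using thetaAB_add_one_right (1 / 2) 0 z τ

section JacobiTheta

variable (x y : ℂ) {τ : ℂ}

theorem jth1_mul_jth1 (hτ : 0 < τ.im) :
    jth1 x τ * jth1 y τ = jth3 (x + y) (2 * τ) * jth2 (x - y) (2 * τ) -
      jth2 (x + y) (2 * τ) * jth3 (x - y) (2 * τ) := by
  have h := thetaAB_mul_thetaAB_same_char (1 / 2) (1 / 2) x y hτ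
  rw [mul_one_div_cancel two_ne_zero, add_halves, thetaAB_half_one, thetaAB_one_one] at h
  rw [jth1, jth1, neg_mul_neg, h]
  ring

theorem jth2_mul_jth2 (hτ : 0 < τ.im) :
    jth2 x τ * jth2 y τ = jth2 (x + y) (2 * τ) * jth3 (x - y) (2 * τ) +
      jth3 (x + y) (2 * τ) * jth2 (x - y) (2 * τ) := by
  have h := thetaAB_mul_thetaAB_same_char (1 / 2) 0 x y hτ
  rwa [mul_zero, add_halves, thetaAB_one_zero] at h

theorem jth3_mul_jth3 (hτ : 0 < τ.im) :
    jth3 x τ * jth3 y τ = jth3 (x + y) (2 * τ) * jth3 (x - y) (2 * τ) +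
      jth2 (x + y) (2 * τ) * jth2 (x - y) (2 * τ) := by
  have h := thetaAB_mul_thetaAB_same_char 0 0 x y hτ
  rwa [mul_zero, zero_add] at h

theorem jth4_mul_jth4 (hτ : 0 < τ.im) :
    jth4 x τ * jth4 y τ = jth3 (x + y) (2 * τ) * jth3 (x - y) (2 * τ) -
      jth2 (x + y) (2 * τ) * jth2 (x - y) (2 * τ) := by
  have h := thetaAB_mul_thetaAB_same_char 0 (1 / 2) x y hτ
  rwa [mul_one_div_cancel two_ne_zero, zero_add, thetaAB_zero_one, thetaAB_half_one, neg_mul,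
    ← sub_eq_add_neg] at h

theorem jth3_sq_mul_jth4_sq_sub_jth4_sq_mul_jth3_sq (hτ : 0 < τ.im) :
    jth3 x τ ^ 2 * jth4 y τ ^ 2 - jth4 x τ ^ 2 * jth3 y τ ^ 2 =
      -(jth2 0 τ ^ 2 * (jth1 (x + y) τ * jth1 (x - y) τ)) := by
  have hsum : x + y + (x - y) = x + x := by ring
  have hdiff : x + y - (x - y) = y + y := by ring
  simp only [sq, jth1_mul_jth1 _ _ hτ, jth2_mul_jth2 _ _ hτ, jth3_mul_jth3 _ _ hτ,
    jth4_mul_jth4 _ _ hτ, hsum, hdiff, sub_self, add_zero]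
  ring

end JacobiTheta

/-- for `τ` in the upper half-plane and `z ∈ ℂ` with `θ₁(2z|τ) ≠ 0`,
`θ₃(0|τ) ≠ 0`, `θ₄(0|τ) ≠ 0`, the determinant of `Ω(z)` equals `−θ₂(0|τ)²·θ₁(2z|τ)`. -/
theorem det_OmegaMat (τ z : ℂ) (hτ : 0 < τ.im)
    (h1 : jth1 (2*z) τ ≠ 0) (h3 : jth3 0 τ ≠ 0) (h4 : jth4 0 τ ≠ 0) :
    (OmegaMat τ z).det = -((jth2 0 τ) ^ 2 * jth1 (2*z) τ) := by
  have hadd : jth3 (2 * z) (2 * τ) ^ 2 + jth2 (2 * z) (2 * τ) ^ 2 = jth3 (2 * z) τ * jth3 0 τ := by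
    simp only [jth3_mul_jth3 _ _ hτ, add_zero, sub_zero, sq]
  have hsub : jth3 (2 * z) (2 * τ) ^ 2 - jth2 (2 * z) (2 * τ) ^ 2 = jth4 (2 * z) τ * jth4 0 τ := by
    simp only [jth4_mul_jth4 _ _ hτ, add_zero, sub_zero, sq]
  have hquartic := jth3_sq_mul_jth4_sq_sub_jth4_sq_mul_jth3_sq (2 * z) 0 hτ
  rw [add_zero, sub_zero] at hquartic
  calc (OmegaMat τ z).det
      = jth4 0 τ ^ 2 / jth3 0 τ * (jth3 (2 * z) τ / jth1 (2 * z) τ) *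
            (jth3 (2 * z) (2 * τ) ^ 2 + jth2 (2 * z) (2 * τ) ^ 2) -
          jth3 0 τ ^ 2 / jth4 0 τ * (jth4 (2 * z) τ / jth1 (2 * z) τ) *
            (jth3 (2 * z) (2 * τ) ^ 2 - jth2 (2 * z) (2 * τ) ^ 2) := by
        rw [OmegaMat, Matrix.det_fin_two_of, psiPlus, psiMinus]
        ring
    _ = (jth3 (2 * z) τ ^ 2 * jth4 0 τ ^ 2 - jth4 (2 * z) τ ^ 2 * jth3 0 τ ^ 2) /
          jth1 (2 * z) τ := by
        rw [hadd, hsub]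
        field_simp
    _ = -(jth2 0 τ ^ 2 * jth1 (2 * z) τ) := by
        rw [hquartic]
        field_simp
end
end

section
/- Let τ be in the upper half-plane and let z ∈ ℂ satisfy θ₁(2z|τ) ≠ 0 (and assume θ₃(0|τ) ≠ 0 and θ₄(0|τ) ≠ 0). Then Ω(z + 1/2) = T₁·Ω(z), where T₁ = [[1,0],[0,−1]]. -/
noncomputable section

open Complex

/-!
As a function of `z`, `θ_{a,b}(z|τ)` is a constant times `exp(2πiaz)` times a translate of
`jacobiTheta₂`, which has period `1`; so `z ↦ z + 1` multiplies it by `exp(2πia)`, which is `-1` for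
`θ₁, θ₂` and `1` for `θ₃, θ₄`. Translating `z` by `1/2` translates `2z` by `1`: it changes the sign
of `ψ_±` through the denominator `θ₁(2z|τ)`, and that of `θ₂(2z|2τ)` but not of `θ₃(2z|2τ)`. In the
top right entry of `Ω` the two signs cancel.
-/

theorem thetaAB_eq_exp_mul_jacobiTheta₂ (a b : ℝ) (z τ : ℂ) :
    thetaAB a b z τ =
      exp (Real.pi * I * τ * a ^ 2 + 2 * Real.pi * I * a * (z + b)) *
        jacobiTheta₂ (z + b + a * τ) τ := by
  simp only [thetaAB, jacobiTheta₂, jacobiTheta₂_term, ← tsum_mul_left, ← exp_add]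
  refine tsum_congr fun k => congrArg exp ?_
  ring

theorem thetaAB_add_one (a b : ℝ) (z τ : ℂ) :
    thetaAB a b (z + 1) τ = exp (2 * Real.pi * I * a) * thetaAB a b z τ := by
  have translate : z + 1 + b + a * τ = z + b + a * τ + 1 := by ring
  rw [thetaAB_eq_exp_mul_jacobiTheta₂, thetaAB_eq_exp_mul_jacobiTheta₂, translate,
    jacobiTheta₂_add_left, ← mul_assoc, ← exp_add]
  ring_nf

theorem thetaAB_zero_periodic (b : ℝ) (τ : ℂ) :
    Function.Periodic (thetaAB 0 b · τ) 1 := fun z => by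
  simp [thetaAB_add_one]

theorem thetaAB_half_antiperiodic (b : ℝ) (τ : ℂ) :
    Function.Antiperiodic (thetaAB (1 / 2) b · τ) 1 := fun z => by
  have exponent : 2 * Real.pi * I * ((1 / 2 : ℝ) : ℂ) = Real.pi * I := by
    push_cast
    ring
  simp only [thetaAB_add_one, exponent, exp_pi_mul_I, neg_one_mul]

theorem jth1_antiperiodic (τ : ℂ) : Function.Antiperiodic (jth1 · τ) 1 := fun z =>
  congrArg Neg.neg (thetaAB_half_antiperiodic (1 / 2) τ z)

theorem jth2_antiperiodic (τ : ℂ) : Function.Antiperiodic (jth2 · τ) 1 :=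
  thetaAB_half_antiperiodic 0 τ

theorem jth3_periodic (τ : ℂ) : Function.Periodic (jth3 · τ) 1 :=
  thetaAB_zero_periodic 0 τ

theorem jth4_periodic (τ : ℂ) : Function.Periodic (jth4 · τ) 1 :=
  thetaAB_zero_periodic (1 / 2) τ

theorem psiPlus_antiperiodic (τ : ℂ) : Function.Antiperiodic (psiPlus τ) (1 / 2) := fun z => by
  simp only [psiPlus, mul_add, mul_one_div_cancel (two_ne_zero' ℂ),
    jth1_antiperiodic τ (2 * z), jth3_periodic τ (2 * z), jth4_periodic τ (2 * z)]
  ring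

theorem psiMinus_antiperiodic (τ : ℂ) : Function.Antiperiodic (psiMinus τ) (1 / 2) := fun z => by
  simp only [psiMinus, mul_add, mul_one_div_cancel (two_ne_zero' ℂ),
    jth1_antiperiodic τ (2 * z), jth3_periodic τ (2 * z), jth4_periodic τ (2 * z)]
  ring

/-- `Ω(z + 1/2) = T₁·Ω(z)` with `T₁ = [[1,0],[0,−1]]`. -/
theorem OmegaMat_half_translation (τ z : ℂ) (hτ : 0 < τ.im)
    (h1 : jth1 (2*z) τ ≠ 0) (h3 : jth3 0 τ ≠ 0) (h4 : jth4 0 τ ≠ 0) :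
    OmegaMat τ (z + 1/2) = !![(1 : ℂ), 0; 0, -1] * OmegaMat τ z := by
  have hθ₂ : jth2 (2 * (z + 1 / 2)) (2 * τ) = -jth2 (2 * z) (2 * τ) := by
    simpa [mul_add] using jth2_antiperiodic (2 * τ) (2 * z)
  have hθ₃ : jth3 (2 * (z + 1 / 2)) (2 * τ) = jth3 (2 * z) (2 * τ) := by
    simpa [mul_add] using jth3_periodic (2 * τ) (2 * z)
  simp only [OmegaMat, hθ₂, hθ₃, psiPlus_antiperiodic τ z, psiMinus_antiperiodic τ z,
    Matrix.mul_fin_two]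
  simp
end
end

section
/- Let τ be in the upper half-plane and let z ∈ ℂ satisfy θ₁(2z|τ) ≠ 0 and θ₄(2z|τ) ≠ 0 (and assume θ₃(0|τ) ≠ 0 and θ₄(0|τ) ≠ 0). Then Ω(z + τ/2) = exp(−πi(2z + τ/2))·T₂·Ω(z), where T₂ = [[0,1],[1,0]]. -/
noncomputable section

open Complex

/-!
Adding `sτ` to `z` completes the square in the exponent of the theta series: up to an elementary
exponential factor it shifts the characteristic `a` to `a + s`, and `a` only matters modulo `1`.
For `θ(·|τ)` the translation `2z ↦ 2z + τ` is by a full quasi-period, so `θ₁`, `θ₃`, `θ₄` pick up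
the same factor, with an extra minus sign for `θ₁` and `θ₄` since they have `b = 1/2`; hence `ψ₊`
and `ψ₋` are exchanged. For `θ(·|2τ)` it is by half a quasi-period, so `θ₂` and `θ₃` are exchanged,
up to the scalar factor of the theorem.
-/

theorem thetaAB_add_int (a b : ℝ) (z τ : ℂ) (n : ℤ) :
    thetaAB (a + n) b z τ = thetaAB a b z τ := by
  unfold thetaAB
  refine (tsum_congr fun k => ?_).trans ((Equiv.addRight n).tsum_eq _)
  rw [Equiv.coe_addRight]
  congr 1
  push_cast
  ring

theorem thetaAB_add_real_mul (a b s : ℝ) (z τ : ℂ) :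
    thetaAB a b (z + s * τ) τ =
      exp (-(Real.pi * I) * (s ^ 2 * τ + 2 * s * (z + b))) * thetaAB (a + s) b z τ := by
  unfold thetaAB
  rw [← tsum_mul_left]
  refine tsum_congr fun k => ?_
  rw [← Complex.exp_add]
  congr 1
  push_cast
  ring

theorem thetaAB_add_tau (a b : ℝ) (z τ : ℂ) :
    thetaAB a b (z + τ) τ = exp (-(Real.pi * I) * (τ + 2 * (z + b))) * thetaAB a b z τ := by
  have shift : thetaAB (a + 1) b z τ = thetaAB a b z τ := by
    simpa only [Int.cast_one] using thetaAB_add_int a b z τ 1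
  simpa only [ofReal_one, one_mul, mul_one, one_pow, shift] using thetaAB_add_real_mul a b 1 z τ

theorem thetaAB_half_add_tau (a : ℝ) (z τ : ℂ) :
    thetaAB a (1 / 2) (z + τ) τ =
      -(exp (-(Real.pi * I) * (τ + 2 * z)) * thetaAB a (1 / 2) z τ) := by
  have exponent : -(Real.pi * I) * (τ + 2 * (z + (1 / 2 : ℝ))) =
      -(Real.pi * I) * (τ + 2 * z) - Real.pi * I := by
    push_cast
    ring
  rw [thetaAB_add_tau, exponent, exp_sub_pi_mul_I, neg_mul (exp _)]

theorem jth1_add_tau (z τ : ℂ) :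
    jth1 (z + τ) τ = -(exp (-(Real.pi * I) * (τ + 2 * z)) * jth1 z τ) := by
  rw [jth1, thetaAB_half_add_tau, jth1, mul_neg]

theorem jth3_add_tau (z τ : ℂ) :
    jth3 (z + τ) τ = exp (-(Real.pi * I) * (τ + 2 * z)) * jth3 z τ := by
  simpa only [jth3, ofReal_zero, add_zero] using thetaAB_add_tau 0 0 z τ

theorem jth4_add_tau (z τ : ℂ) :
    jth4 (z + τ) τ = -(exp (-(Real.pi * I) * (τ + 2 * z)) * jth4 z τ) :=
  thetaAB_half_add_tau 0 z τ

theorem jth3_div_jth1_add_tau (z τ : ℂ) :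
    jth3 (z + τ) τ / jth1 (z + τ) τ = -(jth3 z τ / jth1 z τ) := by
  rw [jth3_add_tau, jth1_add_tau, div_neg, mul_div_mul_left _ _ (exp_ne_zero _)]

theorem jth4_div_jth1_add_tau (z τ : ℂ) :
    jth4 (z + τ) τ / jth1 (z + τ) τ = jth4 z τ / jth1 z τ := by
  rw [jth4_add_tau, jth1_add_tau, neg_div_neg_eq, mul_div_mul_left _ _ (exp_ne_zero _)]

theorem psiPlus_add_half_tau (τ z : ℂ) : psiPlus τ (z + τ / 2) = psiMinus τ z := by
  rw [psiPlus, psiMinus, mul_add, mul_div_cancel₀ τ two_ne_zero, jth3_div_jth1_add_tau,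
    jth4_div_jth1_add_tau, mul_neg]

theorem psiMinus_add_half_tau (τ z : ℂ) : psiMinus τ (z + τ / 2) = psiPlus τ z := by
  rw [psiPlus, psiMinus, mul_add, mul_div_cancel₀ τ two_ne_zero, jth3_div_jth1_add_tau,
    jth4_div_jth1_add_tau, mul_neg, neg_neg]

theorem thetaAB_two_mul_add_tau (a : ℝ) (z τ : ℂ) :
    thetaAB a 0 (z + τ) (2 * τ) =
      exp (-(Real.pi * I) * (z + τ / 2)) * thetaAB (a + 1 / 2) 0 z (2 * τ) := by
  have half_quasi_period : z + τ = z + (1 / 2 : ℝ) * (2 * τ) := by push_cast; ring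
  rw [half_quasi_period, thetaAB_add_real_mul]
  congr 2
  push_cast
  ring

theorem jth3_two_mul_add_tau (z τ : ℂ) :
    jth3 (z + τ) (2 * τ) = exp (-(Real.pi * I) * (z + τ / 2)) * jth2 z (2 * τ) := by
  simpa only [jth2, jth3, zero_add] using thetaAB_two_mul_add_tau 0 z τ

theorem jth2_two_mul_add_tau (z τ : ℂ) :
    jth2 (z + τ) (2 * τ) = exp (-(Real.pi * I) * (z + τ / 2)) * jth3 z (2 * τ) := by
  have shift : thetaAB (1 / 2 + 1 / 2) 0 z (2 * τ) = jth3 z (2 * τ) := by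
    simpa only [jth3, Int.cast_one, zero_add, add_halves] using thetaAB_add_int 0 0 z (2 * τ) 1
  rw [jth2, thetaAB_two_mul_add_tau, shift]

/-- `Ω(z + τ/2) = exp(−πi(2z + τ/2))·T₂·Ω(z)` with `T₂ = [[0,1],[1,0]]`. -/
theorem OmegaMat_tau_half_translation (τ z : ℂ) (hτ : 0 < τ.im)
    (h1 : jth1 (2*z) τ ≠ 0) (h1' : jth4 (2*z) τ ≠ 0) (h3 : jth3 0 τ ≠ 0) (h4 : jth4 0 τ ≠ 0) :
    OmegaMat τ (z + τ/2) =
      Complex.exp (-((Real.pi : ℂ) * Complex.I) * (2*z + τ/2)) •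
        (!![(0 : ℂ), 1; 1, 0] * OmegaMat τ z) := by
  have swap_rows (a b c d : ℂ) : !![(0 : ℂ), 1; 1, 0] * !![a, b; c, d] = !![c, d; a, b] := by
    simp only [Matrix.mul_fin_two, zero_mul, one_mul, zero_add, add_zero]
  rw [OmegaMat, OmegaMat, swap_rows, psiPlus_add_half_tau, psiMinus_add_half_tau, mul_add,
    mul_div_cancel₀ τ two_ne_zero, jth3_two_mul_add_tau, jth2_two_mul_add_tau]
  simp only [Matrix.smul_of, Matrix.smul_cons, Matrix.smul_empty, smul_eq_mul, mul_left_comm]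
end
end

section
/- Let 𝕂 = ℝ. The fixed subring A^{D₂} = {a ∈ A : σ₁(a) = a and σ₂(a) = a} is isomorphic, as an ℝ-algebra, to ℝ[x,y]/(y² − (x−r₁)(x−r₂)(x−r₃)). -/
noncomputable section

open MvPolynomial Matrix

variable (𝕂 : Type) [Field 𝕂]

/-- The ideal of `𝕂[λ₁,λ₂,λ₃]` generated by `λ₁²−λ₂²+r₁−r₂` and `λ₂²−λ₃²+r₂−r₃`. -/
def Icurve (r₁ r₂ r₃ : 𝕂) : Ideal (MvPolynomial (Fin 3) 𝕂) :=
  Ideal.span {X 0 ^ 2 - X 1 ^ 2 + C r₁ - C r₂, X 1 ^ 2 - X 2 ^ 2 + C r₂ - C r₃}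

/-- The coordinate ring `A = 𝕂[λ₁,λ₂,λ₃]/I`. -/
abbrev Acurve (r₁ r₂ r₃ : 𝕂) : Type := MvPolynomial (Fin 3) 𝕂 ⧸ Icurve 𝕂 r₁ r₂ r₃

/-- The images λᵢ of the variables in `A`. -/
def lam (r₁ r₂ r₃ : 𝕂) (i : Fin 3) : Acurve 𝕂 r₁ r₂ r₃ := Ideal.Quotient.mk _ (X i)

/-- Sign-change 𝕂-algebra endomorphism of `A`, for a choice of signs `ε` with `ε i ^ 2 = 1`. -/
def sigmaA (r₁ r₂ r₃ : 𝕂) (ε : Fin 3 → 𝕂) (hε : ∀ i, ε i ^ 2 = 1) :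
    Acurve 𝕂 r₁ r₂ r₃ →ₐ[𝕂] Acurve 𝕂 r₁ r₂ r₃ :=
  Ideal.Quotient.liftₐ (Icurve 𝕂 r₁ r₂ r₃)
    ((Ideal.Quotient.mkₐ 𝕂 (Icurve 𝕂 r₁ r₂ r₃)).comp (aeval fun i => C (ε i) * X i))
    (by
      intro a ha
      have key : ∀ p ∈ ({X 0 ^ 2 - X 1 ^ 2 + C r₁ - C r₂,
          X 1 ^ 2 - X 2 ^ 2 + C r₂ - C r₃} : Set (MvPolynomial (Fin 3) 𝕂)),
          aeval (fun i => C (ε i) * X i) p = p := by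
        intro p hp
        rcases hp with rfl | rfl <;>
          simp [map_sub, map_add, map_pow, aeval_X, algebraMap_eq, mul_pow, ← C_pow, hε]
      have hmem : aeval (fun i => C (ε i) * X i) a ∈ Icurve 𝕂 r₁ r₂ r₃ := by
        have hle : Icurve 𝕂 r₁ r₂ r₃ ≤
            Ideal.comap (aeval (fun i => C (ε i) * X i) :
              MvPolynomial (Fin 3) 𝕂 →ₐ[𝕂] MvPolynomial (Fin 3) 𝕂) (Icurve 𝕂 r₁ r₂ r₃) := by
          simp only [Icurve]
          rw [Ideal.span_le]
          intro p hp
          rw [SetLike.mem_coe, Ideal.mem_comap, key p hp]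
          exact Ideal.subset_span hp
        exact hle ha
      rw [AlgHom.comp_apply, Ideal.Quotient.mkₐ_eq_mk, Ideal.Quotient.eq_zero_iff_mem]
      exact hmem)

/-- The automorphism `σ₁ : (λ₁,λ₂,λ₃) ↦ (λ₁,−λ₂,−λ₃)` of `A`. -/
def σA1 (r₁ r₂ r₃ : 𝕂) : Acurve 𝕂 r₁ r₂ r₃ →ₐ[𝕂] Acurve 𝕂 r₁ r₂ r₃ :=
  sigmaA 𝕂 r₁ r₂ r₃ ![1, -1, -1] (by intro i; fin_cases i <;> norm_num)

/-- The automorphism `σ₂ : (λ₁,λ₂,λ₃) ↦ (−λ₁,−λ₂,λ₃)` of `A`. -/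
def σA2 (r₁ r₂ r₃ : 𝕂) : Acurve 𝕂 r₁ r₂ r₃ →ₐ[𝕂] Acurve 𝕂 r₁ r₂ r₃ :=
  sigmaA 𝕂 r₁ r₂ r₃ ![-1, -1, 1] (by intro i; fin_cases i <;> norm_num)

/-- The ideal `(y² − (x−r₁)(x−r₂)(x−r₃)) ⊆ 𝕂[x,y]`. -/
def Bideal (r₁ r₂ r₃ : 𝕂) : Ideal (MvPolynomial (Fin 2) 𝕂) :=
  Ideal.span {X 1 ^ 2 - (X 0 - C r₁) * (X 0 - C r₂) * (X 0 - C r₃)}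

/-- The ring `B = 𝕂[x,y]/(y² − (x−r₁)(x−r₂)(x−r₃))`. -/
abbrev Bring (r₁ r₂ r₃ : 𝕂) : Type := MvPolynomial (Fin 2) 𝕂 ⧸ Bideal 𝕂 r₁ r₂ r₃

/-- The fixed subring `A^{D₂} = {a ∈ A : σ₁(a) = a, σ₂(a) = a}` as a subalgebra of `A`. -/
def fixedA (r₁ r₂ r₃ : 𝕂) : Subalgebra 𝕂 (Acurve 𝕂 r₁ r₂ r₃) :=
  AlgHom.equalizer (σA1 𝕂 r₁ r₂ r₃) (AlgHom.id 𝕂 _) ⊓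
    AlgHom.equalizer (σA2 𝕂 r₁ r₂ r₃) (AlgHom.id 𝕂 _)

/-!
The functions `x = λᵢ² + rᵢ` and `y = λ₁λ₂λ₃` on the space curve are `D₂`-invariant and satisfy
`y² = (x − r₁)(x − r₂)(x − r₃)`, which gives an algebra map `B → A^{D₂}`.

Injectivity: an element of `B` has the form `p(x) + q(x) y`. If its image in `A` vanishes, the sign
change of `λ₃` alone shows that `p(x) − q(x) y` vanishes too, so that `p(x) = 0` and
`q(x) y² = 0`. But `x` is transcendental over `𝕂`: over an algebraically closed field, any value
`t` of `x` is attained, by extracting square roots of the `t − rᵢ`.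

Surjectivity: a monomial in the `λᵢ` is an eigenvector of `D₂`, and it is invariant exactly when its
three exponents have the same parity. It is then a product of the `λᵢ² = x − rᵢ`, times `y` if the
exponents are odd. Averaging over `D₂` kills the other monomials.
-/

section

variable {𝕂} {r₁ r₂ r₃ : 𝕂} {S : Type*} [CommRing S] [Algebra 𝕂 S]

variable (r₁ r₂ r₃) in
/-- The cubic `(X − r₁)(X − r₂)(X − r₃)`, as a univariate polynomial. -/
def cubic : Polynomial 𝕂 :=
  ∏ i, (Polynomial.X - Polynomial.C (![r₁, r₂, r₃] i))

theorem cubic_ne_zero : cubic r₁ r₂ r₃ ≠ 0 :=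
  Finset.prod_ne_zero_iff.2 fun _ _ ↦ Polynomial.X_sub_C_ne_zero _

theorem aeval_cubic (t : S) :
    Polynomial.aeval t (cubic r₁ r₂ r₃) = ∏ i, (t - algebraMap 𝕂 S (![r₁, r₂, r₃] i)) := by
  simp [cubic, map_prod]

namespace Bring

variable (r₁ r₂ r₃) in
/-- The coordinate function `x` on the plane cubic. -/
def x : Bring 𝕂 r₁ r₂ r₃ := Ideal.Quotient.mk _ (X 0)

variable (r₁ r₂ r₃) in
/-- The coordinate function `y` on the plane cubic. -/
def y : Bring 𝕂 r₁ r₂ r₃ := Ideal.Quotient.mk _ (X 1)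

theorem y_sq : y r₁ r₂ r₃ ^ 2 = Polynomial.aeval (x r₁ r₂ r₃) (cubic r₁ r₂ r₃) := by
  rw [aeval_cubic, Fin.prod_univ_three]
  exact Ideal.Quotient.eq.2 (Ideal.mem_span_singleton_self _)

/-- The universal property of `Bring`: a pair `(u, v)` in an algebra satisfying the equation of
the cubic determines an algebra homomorphism with `x ↦ u` and `y ↦ v`. -/
def lift (u v : S) (h : v ^ 2 = Polynomial.aeval u (cubic r₁ r₂ r₃)) :
    Bring 𝕂 r₁ r₂ r₃ →ₐ[𝕂] S :=
  Ideal.Quotient.liftₐ _ (aeval ![u, v]) <| by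
    suffices Bideal 𝕂 r₁ r₂ r₃ ≤ RingHom.ker (aeval ![u, v] : MvPolynomial (Fin 2) 𝕂 →ₐ[𝕂] S) from
      fun _ ha ↦ this ha
    rw [Bideal, Ideal.span_singleton_le_iff_mem, RingHom.mem_ker]
    simp [h, aeval_cubic, Fin.prod_univ_three]

@[simp]
theorem lift_x (u v : S) (h : v ^ 2 = Polynomial.aeval u (cubic r₁ r₂ r₃)) :
    lift u v h (x r₁ r₂ r₃) = u :=
  aeval_X ![u, v] 0

@[simp]
theorem lift_y (u v : S) (h : v ^ 2 = Polynomial.aeval u (cubic r₁ r₂ r₃)) :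
    lift u v h (y r₁ r₂ r₃) = v :=
  aeval_X ![u, v] 1

theorem algHom_ext {f g : Bring 𝕂 r₁ r₂ r₃ →ₐ[𝕂] S} (hx : f (x r₁ r₂ r₃) = g (x r₁ r₂ r₃))
    (hy : f (y r₁ r₂ r₃) = g (y r₁ r₂ r₃)) : f = g :=
  Ideal.Quotient.algHom_ext 𝕂 <| MvPolynomial.algHom_ext <| Fin.forall_fin_two.2 ⟨hx, hy⟩

theorem exists_eq_aeval_x_add_aeval_x_mul_y (b : Bring 𝕂 r₁ r₂ r₃) : ∃ p q : Polynomial 𝕂,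
    b = Polynomial.aeval (x r₁ r₂ r₃) p + Polynomial.aeval (x r₁ r₂ r₃) q * y r₁ r₂ r₃ := by
  obtain ⟨f, rfl⟩ := Ideal.Quotient.mk_surjective b
  induction f using MvPolynomial.induction_on with
  | C c => exact ⟨Polynomial.C c, 0, by rw [Polynomial.aeval_C, map_zero, zero_mul, add_zero]; rfl⟩
  | add f g hf hg =>
    obtain ⟨p, q, hf⟩ := hf
    obtain ⟨p', q', hg⟩ := hg
    exact ⟨p + p', q + q', by rw [map_add, hf, hg, map_add, map_add]; ring⟩
  | mul_X f i hf =>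
    obtain ⟨p, q, hf⟩ := hf
    rw [map_mul, hf]
    match i with
    | 0 =>
      refine ⟨p * Polynomial.X, q * Polynomial.X, ?_⟩
      change _ * x r₁ r₂ r₃ = _
      simp only [map_mul, Polynomial.aeval_X]
      ring
    | 1 =>
      refine ⟨q * cubic r₁ r₂ r₃, p, ?_⟩
      change _ * y r₁ r₂ r₃ = _
      rw [map_mul, ← y_sq]
      ring

end Bring

namespace Acurve

variable (r₁ r₂ r₃) in
/-- The function `x = λᵢ² + rᵢ` on the space curve; it does not depend on `i`, see `lam_sq`. -/
def x : Acurve 𝕂 r₁ r₂ r₃ := lam 𝕂 r₁ r₂ r₃ 0 ^ 2 + algebraMap 𝕂 _ r₁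

variable (r₁ r₂ r₃) in
/-- The function `y = λ₁λ₂λ₃` on the space curve. -/
def y : Acurve 𝕂 r₁ r₂ r₃ := ∏ i, lam 𝕂 r₁ r₂ r₃ i

theorem lam_sq (i : Fin 3) :
    lam 𝕂 r₁ r₂ r₃ i ^ 2 = x r₁ r₂ r₃ - algebraMap 𝕂 _ (![r₁, r₂, r₃] i) := by
  have h₀₁ : lam 𝕂 r₁ r₂ r₃ 0 ^ 2 - lam 𝕂 r₁ r₂ r₃ 1 ^ 2 + algebraMap 𝕂 _ r₁ -
      algebraMap 𝕂 _ r₂ = 0 :=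
    Ideal.Quotient.eq_zero_iff_mem.2 (Ideal.subset_span (.inl rfl))
  have h₁₂ : lam 𝕂 r₁ r₂ r₃ 1 ^ 2 - lam 𝕂 r₁ r₂ r₃ 2 ^ 2 + algebraMap 𝕂 _ r₂ -
      algebraMap 𝕂 _ r₃ = 0 :=
    Ideal.Quotient.eq_zero_iff_mem.2 (Ideal.subset_span (.inr rfl))
  match i with
  | 0 => simp [x]
  | 1 => simp only [x, cons_val]; linear_combination -h₀₁
  | 2 => simp only [x, cons_val]; linear_combination -h₀₁ - h₁₂

theorem y_sq : y r₁ r₂ r₃ ^ 2 = Polynomial.aeval (x r₁ r₂ r₃) (cubic r₁ r₂ r₃) := by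
  simp only [y, aeval_cubic, ← Finset.prod_pow, lam_sq]

/-- The universal property of `Acurve`: square roots `l i` of the elements `t - rᵢ` of an algebra
determine an algebra homomorphism with `λᵢ ↦ l i`. -/
def lift (t : S) (l : Fin 3 → S) (h : ∀ i, l i ^ 2 = t - algebraMap 𝕂 S (![r₁, r₂, r₃] i)) :
    Acurve 𝕂 r₁ r₂ r₃ →ₐ[𝕂] S :=
  Ideal.Quotient.liftₐ _ (aeval l) <| by
    suffices Icurve 𝕂 r₁ r₂ r₃ ≤ RingHom.ker (aeval l : MvPolynomial (Fin 3) 𝕂 →ₐ[𝕂] S) from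
      fun _ ha ↦ this ha
    rw [Icurve, Ideal.span_le]
    rintro p (rfl | rfl) <;> simp [RingHom.mem_ker, h]

@[simp]
theorem lift_lam (t : S) (l : Fin 3 → S)
    (h : ∀ i, l i ^ 2 = t - algebraMap 𝕂 S (![r₁, r₂, r₃] i)) (i : Fin 3) :
    lift t l h (lam 𝕂 r₁ r₂ r₃ i) = l i :=
  aeval_X l i

@[simp]
theorem lift_x (t : S) (l : Fin 3 → S)
    (h : ∀ i, l i ^ 2 = t - algebraMap 𝕂 S (![r₁, r₂, r₃] i)) :
    lift t l h (x r₁ r₂ r₃) = t := by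
  simp [x, h]

variable (r₁ r₂ r₃) in
theorem exists_algHom_x_eq {L : Type*} [Field L] [Algebra 𝕂 L] [IsAlgClosed L] (t : L) :
    ∃ ψ : Acurve 𝕂 r₁ r₂ r₃ →ₐ[𝕂] L, ψ (x r₁ r₂ r₃) = t := by
  choose l hl using fun i ↦
    IsAlgClosed.exists_pow_nat_eq (t - algebraMap 𝕂 L (![r₁, r₂, r₃] i)) two_pos
  exact ⟨lift t l hl, lift_x t l hl⟩

variable (r₁ r₂ r₃) in
theorem transcendental_x : Transcendental 𝕂 (x r₁ r₂ r₃) := by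
  obtain ⟨ψ, hψ⟩ := exists_algHom_x_eq r₁ r₂ r₃
    (algebraMap (RatFunc 𝕂) (AlgebraicClosure (RatFunc 𝕂)) RatFunc.X)
  have hX : Transcendental 𝕂 (ψ (x r₁ r₂ r₃)) := by
    rw [hψ, transcendental_algebraMap_iff (algebraMap (RatFunc 𝕂) _).injective]
    exact RatFunc.transcendental_X
  exact fun hx ↦ hX (hx.algHom ψ)

section signs

variable (ε : Fin 3 → 𝕂) (hε : ∀ i, ε i ^ 2 = 1)

@[simp]
theorem sigmaA_lam (i : Fin 3) :
    sigmaA 𝕂 r₁ r₂ r₃ ε hε (lam 𝕂 r₁ r₂ r₃ i) = ε i • lam 𝕂 r₁ r₂ r₃ i := by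
  change Ideal.Quotient.mk _ (aeval (fun i ↦ C (ε i) * X i) (X i)) = _
  rw [aeval_X, ← smul_eq_C_mul]
  rfl

theorem sigmaA_prod_lam_pow (u : Fin 3 → ℕ) :
    sigmaA 𝕂 r₁ r₂ r₃ ε hε (∏ i, lam 𝕂 r₁ r₂ r₃ i ^ u i) =
      (∏ i, ε i ^ u i) • ∏ i, lam 𝕂 r₁ r₂ r₃ i ^ u i := by
  simp only [map_prod, map_pow, sigmaA_lam, smul_pow, Finset.prod_smul]

theorem sigmaA_x : sigmaA 𝕂 r₁ r₂ r₃ ε hε (x r₁ r₂ r₃) = x r₁ r₂ r₃ := by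
  simp [x, smul_pow, hε]

theorem sigmaA_y : sigmaA 𝕂 r₁ r₂ r₃ ε hε (y r₁ r₂ r₃) = (∏ i, ε i) • y r₁ r₂ r₃ := by
  simpa [y] using sigmaA_prod_lam_pow (r₁ := r₁) (r₂ := r₂) (r₃ := r₃) ε hε 1

end signs

theorem eq_zero_of_aeval_x_add_aeval_x_mul_y_eq_zero (h2 : (2 : 𝕂) ≠ 0) {p q : Polynomial 𝕂}
    (h : Polynomial.aeval (x r₁ r₂ r₃) p + Polynomial.aeval (x r₁ r₂ r₃) q * y r₁ r₂ r₃ = 0) :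
    p = 0 ∧ q = 0 := by
  have h_conj : Polynomial.aeval (x r₁ r₂ r₃) p +
      Polynomial.aeval (x r₁ r₂ r₃) q * -y r₁ r₂ r₃ = 0 := by
    have := congrArg (sigmaA 𝕂 r₁ r₂ r₃ ![1, 1, -1] (by simp [Fin.forall_fin_succ])) h
    simpa [← Polynomial.aeval_algHom_apply, sigmaA_x, sigmaA_y, Fin.prod_univ_three]
      using this
  have hp : Polynomial.aeval (x r₁ r₂ r₃) p = 0 := by
    have : (2 : 𝕂) • Polynomial.aeval (x r₁ r₂ r₃) p = 0 := by
      rw [two_smul]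
      linear_combination h + h_conj
    exact (smul_eq_zero_iff_right h2).1 this
  have hq : Polynomial.aeval (x r₁ r₂ r₃) (q * cubic r₁ r₂ r₃) = 0 := by
    rw [map_mul, ← y_sq]
    linear_combination y r₁ r₂ r₃ * (h - hp)
  have hx := transcendental_iff.1 (transcendental_x r₁ r₂ r₃)
  exact ⟨hx p hp, (mul_eq_zero.1 (hx _ hq)).resolve_right cubic_ne_zero⟩

variable (r₁ r₂ r₃) in
/-- The sum of the images of a function under the group `D₂ = {1, σ₁, σ₂, σ₁σ₂}`: four times the
Reynolds operator. -/
def orbitSum : Acurve 𝕂 r₁ r₂ r₃ →ₗ[𝕂] Acurve 𝕂 r₁ r₂ r₃ :=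
  (LinearMap.id + (σA1 𝕂 r₁ r₂ r₃).toLinearMap) ∘ₗ (LinearMap.id + (σA2 𝕂 r₁ r₂ r₃).toLinearMap)

theorem orbitSum_of_mem_fixedA {a : Acurve 𝕂 r₁ r₂ r₃} (ha : a ∈ fixedA 𝕂 r₁ r₂ r₃) :
    orbitSum r₁ r₂ r₃ a = (2 * 2 : 𝕂) • a := by
  have h₁ : σA1 𝕂 r₁ r₂ r₃ a = a := ha.1
  have h₂ : σA2 𝕂 r₁ r₂ r₃ a = a := ha.2
  simp only [orbitSum, LinearMap.comp_apply, LinearMap.add_apply, LinearMap.id_apply,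
    AlgHom.toLinearMap_apply, map_add, h₁, h₂]
  module

theorem orbitSum_prod_lam_pow (u : Fin 3 → ℕ) :
    orbitSum r₁ r₂ r₃ (∏ i, lam 𝕂 r₁ r₂ r₃ i ^ u i) =
      ((1 + (-1) ^ (u 0 + u 1)) * (1 + (-1) ^ (u 1 + u 2)) : 𝕂) •
        ∏ i, lam 𝕂 r₁ r₂ r₃ i ^ u i := by
  have h₁ : σA1 𝕂 r₁ r₂ r₃ (∏ i, lam 𝕂 r₁ r₂ r₃ i ^ u i) =
      ((-1) ^ (u 1 + u 2) : 𝕂) • ∏ i, lam 𝕂 r₁ r₂ r₃ i ^ u i := by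
    rw [σA1, sigmaA_prod_lam_pow]
    simp [Fin.prod_univ_three fun i ↦ ![_, _, _] i ^ _, pow_add]
  have h₂ : σA2 𝕂 r₁ r₂ r₃ (∏ i, lam 𝕂 r₁ r₂ r₃ i ^ u i) =
      ((-1) ^ (u 0 + u 1) : 𝕂) • ∏ i, lam 𝕂 r₁ r₂ r₃ i ^ u i := by
    rw [σA2, sigmaA_prod_lam_pow]
    simp [Fin.prod_univ_three fun i ↦ ![_, _, _] i ^ _, pow_add]
  simp only [orbitSum, LinearMap.comp_apply, LinearMap.add_apply, LinearMap.id_apply,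
    AlgHom.toLinearMap_apply, map_add, map_smul, h₁, h₂]
  module

theorem span_range_prod_lam_pow :
    Submodule.span 𝕂 (Set.range fun u : Fin 3 → ℕ ↦ ∏ i, lam 𝕂 r₁ r₂ r₃ i ^ u i) = ⊤ := by
  refine eq_top_iff.2 fun a _ ↦ ?_
  obtain ⟨f, rfl⟩ := Ideal.Quotient.mk_surjective a
  induction f using MvPolynomial.induction_on' with
  | monomial u c =>
    have h : Ideal.Quotient.mk (Icurve 𝕂 r₁ r₂ r₃) (monomial u c) =
        c • ∏ i, lam 𝕂 r₁ r₂ r₃ i ^ u i := by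
      rw [monomial_eq, Finsupp.prod_fintype _ _ (by simp), map_mul, map_prod,
        Algebra.smul_def c (∏ i, lam 𝕂 r₁ r₂ r₃ i ^ u i)]
      simp only [map_pow]
      rfl
    rw [h]
    exact Submodule.smul_mem _ c (Submodule.subset_span ⟨u, rfl⟩)
  | add f g hf hg =>
    rw [map_add]
    exact add_mem (hf trivial) (hg trivial)

end Acurve

namespace Bring

variable (r₁ r₂ r₃) in
/-- The pullback of functions along the quotient map from the space curve to the plane cubic,
`(λ₁, λ₂, λ₃) ↦ (λᵢ² + rᵢ, λ₁λ₂λ₃)`. -/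
def toAcurve : Bring 𝕂 r₁ r₂ r₃ →ₐ[𝕂] Acurve 𝕂 r₁ r₂ r₃ :=
  lift (Acurve.x r₁ r₂ r₃) (Acurve.y r₁ r₂ r₃) Acurve.y_sq

theorem toAcurve_injective (h2 : (2 : 𝕂) ≠ 0) : Function.Injective (toAcurve r₁ r₂ r₃) := by
  refine (injective_iff_map_eq_zero _).2 fun b hb ↦ ?_
  obtain ⟨p, q, rfl⟩ := exists_eq_aeval_x_add_aeval_x_mul_y b
  simp only [toAcurve, map_add, map_mul, ← Polynomial.aeval_algHom_apply, lift_x, lift_y] at hb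
  obtain ⟨rfl, rfl⟩ := Acurve.eq_zero_of_aeval_x_add_aeval_x_mul_y_eq_zero h2 hb
  simp

theorem sigmaA_comp_toAcurve (ε : Fin 3 → 𝕂) (hε : ∀ i, ε i ^ 2 = 1) (h : ∏ i, ε i = 1) :
    (sigmaA 𝕂 r₁ r₂ r₃ ε hε).comp (toAcurve r₁ r₂ r₃) = toAcurve r₁ r₂ r₃ :=
  algHom_ext (by simp [toAcurve, Acurve.sigmaA_x]) (by simp [toAcurve, Acurve.sigmaA_y, h])

theorem range_toAcurve_le_fixedA : (toAcurve r₁ r₂ r₃).range ≤ fixedA 𝕂 r₁ r₂ r₃ := by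
  have h₁ : (σA1 𝕂 r₁ r₂ r₃).comp (toAcurve r₁ r₂ r₃) = toAcurve r₁ r₂ r₃ :=
    sigmaA_comp_toAcurve _ _ (by simp [Fin.prod_univ_three])
  have h₂ : (σA2 𝕂 r₁ r₂ r₃).comp (toAcurve r₁ r₂ r₃) = toAcurve r₁ r₂ r₃ :=
    sigmaA_comp_toAcurve _ _ (by simp [Fin.prod_univ_three])
  rintro _ ⟨b, rfl⟩
  exact ⟨DFunLike.congr_fun h₁ b, DFunLike.congr_fun h₂ b⟩

theorem x_mem_range_toAcurve : Acurve.x r₁ r₂ r₃ ∈ (toAcurve r₁ r₂ r₃).range :=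
  ⟨x r₁ r₂ r₃, lift_x _ _ _⟩

theorem y_mem_range_toAcurve : Acurve.y r₁ r₂ r₃ ∈ (toAcurve r₁ r₂ r₃).range :=
  ⟨y r₁ r₂ r₃, lift_y _ _ _⟩

theorem prod_lam_pow_mem_range_toAcurve (u : Fin 3 → ℕ) (e : ℕ) (hu : ∀ i, u i % 2 = e) :
    ∏ i, lam 𝕂 r₁ r₂ r₃ i ^ u i ∈ (toAcurve r₁ r₂ r₃).range := by
  have h_sq (i : Fin 3) : lam 𝕂 r₁ r₂ r₃ i ^ 2 ∈ (toAcurve r₁ r₂ r₃).range := by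
    rw [Acurve.lam_sq]
    exact sub_mem x_mem_range_toAcurve (Subalgebra.algebraMap_mem _ _)
  have h_prod : ∏ i, lam 𝕂 r₁ r₂ r₃ i ^ u i =
      (∏ i, (lam 𝕂 r₁ r₂ r₃ i ^ 2) ^ (u i / 2)) * Acurve.y r₁ r₂ r₃ ^ e := by
    rw [Acurve.y, ← Finset.prod_pow, ← Finset.prod_mul_distrib]
    refine Finset.prod_congr rfl fun i _ ↦ ?_
    rw [← pow_mul, ← pow_add, ← hu i, Nat.div_add_mod]
  rw [h_prod]
  exact mul_mem (prod_mem fun i _ ↦ pow_mem (h_sq i) _) (pow_mem y_mem_range_toAcurve e)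

theorem orbitSum_prod_lam_pow_mem_range_toAcurve (u : Fin 3 → ℕ) :
    Acurve.orbitSum r₁ r₂ r₃ (∏ i, lam 𝕂 r₁ r₂ r₃ i ^ u i) ∈ (toAcurve r₁ r₂ r₃).range := by
  rw [Acurve.orbitSum_prod_lam_pow]
  rcases Nat.even_or_odd (u 0 + u 1) with h₀₁ | h₀₁
  · rcases Nat.even_or_odd (u 1 + u 2) with h₁₂ | h₁₂
    · rw [Nat.even_iff] at h₀₁ h₁₂
      have hu : ∀ i, u i % 2 = u 0 % 2 := by
        simp only [Fin.forall_fin_succ]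
        grind
      exact Subalgebra.smul_mem _ (prod_lam_pow_mem_range_toAcurve u _ hu) _
    · simp [h₁₂.neg_one_pow]
  · simp [h₀₁.neg_one_pow]

theorem orbitSum_mem_range_toAcurve (a : Acurve 𝕂 r₁ r₂ r₃) :
    Acurve.orbitSum r₁ r₂ r₃ a ∈ (toAcurve r₁ r₂ r₃).range := by
  suffices ⊤ ≤ (toAcurve r₁ r₂ r₃).range.toSubmodule.comap (Acurve.orbitSum r₁ r₂ r₃) from
    this (Submodule.mem_top (x := a))
  rw [← Acurve.span_range_prod_lam_pow, Submodule.span_le]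
  rintro _ ⟨u, rfl⟩
  exact orbitSum_prod_lam_pow_mem_range_toAcurve u

theorem range_toAcurve (h2 : (2 : 𝕂) ≠ 0) :
    (toAcurve r₁ r₂ r₃).range = fixedA 𝕂 r₁ r₂ r₃ := by
  refine le_antisymm range_toAcurve_le_fixedA fun a ha ↦ ?_
  have h := orbitSum_mem_range_toAcurve a
  rw [Acurve.orbitSum_of_mem_fixedA ha] at h
  exact (Submodule.smul_mem_iff (toAcurve r₁ r₂ r₃).range.toSubmodule (mul_ne_zero h2 h2)).1 h

end Bring

end

theorem fixedA_iso_Bring_general (𝕂 : Type) [Field 𝕂] (h2 : (2 : 𝕂) ≠ 0) (r₁ r₂ r₃ : 𝕂) :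
    Nonempty (fixedA 𝕂 r₁ r₂ r₃ ≃ₐ[𝕂] Bring 𝕂 r₁ r₂ r₃) :=
  ⟨((AlgEquiv.ofInjective (Bring.toAcurve r₁ r₂ r₃) (Bring.toAcurve_injective h2)).trans
    (Subalgebra.equivOfEq _ _ (Bring.range_toAcurve h2))).symm⟩

/-- For 𝕂 = ℝ, the fixed subring `A^{D₂}` is isomorphic as an ℝ-algebra to
`ℝ[x,y]/(y² − (x−r₁)(x−r₂)(x−r₃))`. -/
theorem fixedA_iso_Bring (r₁ r₂ r₃ : ℝ) (h12 : r₁ ≠ r₂) (h13 : r₁ ≠ r₃) (h23 : r₂ ≠ r₃) :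
    Nonempty ((fixedA ℝ r₁ r₂ r₃) ≃ₐ[ℝ] (Bring ℝ r₁ r₂ r₃)) :=
  fixedA_iso_Bring_general ℝ two_ne_zero r₁ r₂ r₃
end
end

section
/- In the polynomial ring ℝ[λ₁,λ₂,λ₃], the subring of elements fixed by both automorphisms τ₁: (λ₁,λ₂,λ₃) ↦ (λ₁,−λ₂,−λ₃) and τ₂: (λ₁,λ₂,λ₃) ↦ (−λ₁,−λ₂,λ₃) equals the ℝ-subalgebra generated by λ₁², λ₂², λ₃² and λ₁λ₂λ₃. -/
/-!
Changing the signs of the variables in a set `s` multiplies the monomial `X ^ d` by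
`(-1) ^ ∑ i ∈ s, d i`. As `2` is a non-zero-divisor, the fixed polynomials are therefore those
in whose monomials the variables of `s` have even total degree. If this holds for every pair of
consecutive variables, then in each monomial all exponents have the same parity `b`, and such a
monomial is a product of squares of variables times `(∏ i, X i) ^ b`.
-/

noncomputable section

open MvPolynomial

/-- The ℝ-algebra endomorphism of `ℝ[λ₁,λ₂,λ₃]` sending `λᵢ ↦ ε i · λᵢ`. -/
def tauPoly (ε : Fin 3 → ℝ) : MvPolynomial (Fin 3) ℝ →ₐ[ℝ] MvPolynomial (Fin 3) ℝ :=
  aeval fun i => C (ε i) * X i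

/-- `τ₁ : (λ₁,λ₂,λ₃) ↦ (λ₁,−λ₂,−λ₃)`. -/
def tau1 : MvPolynomial (Fin 3) ℝ →ₐ[ℝ] MvPolynomial (Fin 3) ℝ := tauPoly ![1, -1, -1]

/-- `τ₂ : (λ₁,λ₂,λ₃) ↦ (−λ₁,−λ₂,λ₃)`. -/
def tau2 : MvPolynomial (Fin 3) ℝ →ₐ[ℝ] MvPolynomial (Fin 3) ℝ := tauPoly ![-1, -1, 1]

section FlipSigns

variable {σ R : Type*} [DecidableEq σ] [CommRing R]

/-- The sign change `X i ↦ -X i` for `i ∈ s`, fixing the other variables. The automorphisms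
`τ₁` and `τ₂` are the cases `s = {1, 2}` and `s = {0, 1}`. -/
def flipSigns (s : Finset σ) : MvPolynomial σ R →ₐ[R] MvPolynomial σ R :=
  aeval fun i => if i ∈ s then -X i else X i

theorem flipSigns_X (s : Finset σ) (i : σ) :
    flipSigns s (X i : MvPolynomial σ R) = if i ∈ s then -X i else X i :=
  aeval_X _ i

theorem flipSigns_X_sq (s : Finset σ) (i : σ) :
    flipSigns s (X i ^ 2 : MvPolynomial σ R) = X i ^ 2 := by
  rw [map_pow, flipSigns_X]
  split_ifs
  · exact neg_sq _
  · rfl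

theorem flipSigns_prod_X [Fintype σ] (s : Finset σ) :
    flipSigns s (∏ i, X i : MvPolynomial σ R) = (-1) ^ s.card * ∏ i, X i := by
  have flip_eq_mul (i : σ) :
      flipSigns s (X i : MvPolynomial σ R) = (if i ∈ s then -1 else 1) * X i := by
    rw [flipSigns_X, ite_mul, neg_one_mul, one_mul]
  simp only [map_prod, flip_eq_mul, Finset.prod_mul_distrib, Finset.prod_ite_mem,
    Finset.univ_inter, Finset.prod_const]

theorem flipSigns_monomial (s : Finset σ) (d : σ →₀ ℕ) (r : R) :
    flipSigns s (monomial d r) = monomial d ((-1) ^ (∑ i ∈ s, d i) * r) := by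
  have flip_pow (i : σ) (k : ℕ) : (if i ∈ s then -X i else X i : MvPolynomial σ R) ^ k =
      (if i ∈ s then (-1) ^ k else 1) * X i ^ k := by
    split_ifs
    · exact neg_pow _ _
    · rw [one_mul]
  have sign_prod : (d.prod fun i k => if i ∈ s then (-1) ^ k else 1 : MvPolynomial σ R) =
      (-1) ^ ∑ i ∈ s, d i := by
    rw [Finsupp.prod, Finset.prod_ite_mem, Finset.prod_pow_eq_pow_sum]
    congr 1
    refine Finset.sum_subset Finset.inter_subset_right fun i hi hid => ?_
    simpa [hi] using hid
  rw [flipSigns, aeval_monomial, algebraMap_eq]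
  simp only [flip_pow]
  rw [Finsupp.prod_mul, sign_prod, monomial_eq, C_mul, C_pow, C_neg, C_1]
  ring

theorem coeff_flipSigns (s : Finset σ) (p : MvPolynomial σ R) (d : σ →₀ ℕ) :
    coeff d (flipSigns s p) = (-1) ^ (∑ i ∈ s, d i) * coeff d p := by
  induction p using MvPolynomial.induction_on' with
  | add p q hp hq => rw [map_add, coeff_add, coeff_add, hp, hq, mul_add]
  | monomial e r =>
    rw [flipSigns_monomial, coeff_monomial, coeff_monomial]
    split_ifs with hed
    · rw [hed]
    · rw [mul_zero]

theorem flipSigns_eq_self_iff (h2 : IsLeftRegular (2 : R)) (s : Finset σ)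
    (p : MvPolynomial σ R) :
    flipSigns s p = p ↔ ∀ d ∈ p.support, Even (∑ i ∈ s, d i) := by
  simp only [MvPolynomial.ext_iff, coeff_flipSigns, mem_support_iff]
  refine forall_congr' fun d => ?_
  rcases Nat.even_or_odd (∑ i ∈ s, d i) with hd | hd
  · simp only [hd, hd.neg_one_pow, one_mul, implies_true]
  · rw [hd.neg_one_pow, neg_one_mul, neg_eq_iff_add_eq_zero, ← two_mul,
      h2.mul_left_eq_zero_iff]
    simp only [Nat.not_even_iff_odd.mpr hd, imp_false, not_not]

end FlipSigns

theorem monomial_mem_adjoin_prod_X_sq {σ R : Type*} [Fintype σ] [CommSemiring R] {d : σ →₀ ℕ}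
    {e : σ → ℕ} {b : ℕ} (hd : ∀ i, d i = 2 * e i + b) (r : R) :
    monomial d r ∈ Algebra.adjoin R
      (insert (∏ i, X i) (Set.range fun i => X i ^ 2) : Set (MvPolynomial σ R)) := by
  have factorization : monomial d r =
      r • ((∏ i, (X i ^ 2) ^ e i) * (∏ i, X i) ^ b : MvPolynomial σ R) := by
    rw [monomial_eq, Finsupp.prod_fintype _ _ fun _ => pow_zero _, smul_eq_C_mul,
      ← Finset.prod_pow, ← Finset.prod_mul_distrib]
    simp only [hd, pow_add, pow_mul]
  rw [factorization]
  refine Subalgebra.smul_mem _ (mul_mem (Subalgebra.prod_mem _ fun i _ => ?_) (pow_mem ?_ b)) r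
  · exact pow_mem (Algebra.subset_adjoin (Set.mem_insert_of_mem _ (Set.mem_range_self i))) _
  · exact Algebra.subset_adjoin (Set.mem_insert _ _)

theorem mod_two_eq_of_even_consecutive_add {n : ℕ} {f : Fin (n + 1) → ℕ}
    (hf : ∀ i : Fin n, Even (f i.castSucc + f i.succ)) (i : Fin (n + 1)) :
    f i % 2 = f 0 % 2 := by
  induction i using Fin.induction with
  | zero => rfl
  | succ i ih =>
    have := Nat.even_iff.mp (hf i)
    lia

theorem fixed_polynomial_ring_eq_adjoin_general {R : Type*} [CommRing R]
    (h2 : IsLeftRegular (2 : R)) (n : ℕ) :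
    ⨅ i : Fin n, AlgHom.equalizer (flipSigns {i.castSucc, i.succ})
        (AlgHom.id R (MvPolynomial (Fin (n + 1)) R)) =
      Algebra.adjoin R (insert (∏ i, X i) (Set.range fun i => X i ^ 2)) := by
  apply le_antisymm
  · intro p hp
    simp only [Algebra.mem_iInf, AlgHom.mem_equalizer, AlgHom.id_apply,
      flipSigns_eq_self_iff h2, Finset.sum_pair (Fin.castSucc_lt_succ).ne] at hp
    have exponent_eq (d) (hd : d ∈ p.support) (i) : d i = 2 * (d i / 2) + d 0 % 2 := by
      rw [← mod_two_eq_of_even_consecutive_add (fun j => hp j d hd) i, Nat.div_add_mod]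
    rw [p.as_sum]
    exact Subalgebra.sum_mem _ fun d hd => monomial_mem_adjoin_prod_X_sq (exponent_eq d hd) _
  · rw [Algebra.adjoin_le_iff]
    rintro _ (rfl | ⟨j, rfl⟩) <;>
      simp only [SetLike.mem_coe, Algebra.mem_iInf, AlgHom.mem_equalizer, AlgHom.id_apply]
    · intro i
      rw [flipSigns_prod_X, Finset.card_pair (Fin.castSucc_lt_succ).ne, neg_one_sq, one_mul]
    · exact fun i => flipSigns_X_sq _ j

theorem tau1_eq_flipSigns : tau1 = flipSigns {1, 2} := by
  ext1 i
  fin_cases i <;> simp [tau1, tauPoly, flipSigns_X]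

theorem tau2_eq_flipSigns : tau2 = flipSigns {0, 1} := by
  ext1 i
  fin_cases i <;> simp [tau2, tauPoly, flipSigns_X]

/-- the subring of `ℝ[λ₁,λ₂,λ₃]` fixed by both `τ₁` and `τ₂` equals the
ℝ-subalgebra generated by `λ₁², λ₂², λ₃²` and `λ₁λ₂λ₃`. -/
theorem fixed_polynomial_ring_eq_adjoin :
    AlgHom.equalizer tau1 (AlgHom.id ℝ (MvPolynomial (Fin 3) ℝ)) ⊓
      AlgHom.equalizer tau2 (AlgHom.id ℝ (MvPolynomial (Fin 3) ℝ)) =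
    Algebra.adjoin ℝ {X 0 ^ 2, X 1 ^ 2, X 2 ^ 2, X 0 * X 1 * X 2} := by
  have fixed_eq : AlgHom.equalizer tau1 (AlgHom.id ℝ _) ⊓ AlgHom.equalizer tau2 (AlgHom.id ℝ _) =
      ⨅ i : Fin 2, AlgHom.equalizer (flipSigns {i.castSucc, i.succ}) (AlgHom.id ℝ _) := by
    ext p
    simp [tau1_eq_flipSigns, tau2_eq_flipSigns, Algebra.mem_iInf, Fin.forall_fin_two, and_comm]
  have generators_eq : ({X 0 ^ 2, X 1 ^ 2, X 2 ^ 2, X 0 * X 1 * X 2} :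
      Set (MvPolynomial (Fin 3) ℝ)) = insert (∏ i, X i) (Set.range fun i => X i ^ 2) := by
    ext p
    simp only [Set.mem_insert_iff, Set.mem_singleton_iff, Set.mem_range, Fin.exists_fin_succ,
      Fin.prod_univ_three]
    grind
  rw [fixed_eq, generators_eq]
  exact fixed_polynomial_ring_eq_adjoin_general (IsRegular.of_ne_zero two_ne_zero).left 2
end
end
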